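/- arXiv:1501.00903 — 2 statements merged into one kernel-verified Lean document; each statement's English description precedes it below -/
import Mathlib

section
/- For every n ≥ 0, the expectation E_n = (Σ_{k=0}^{n} k·T_{n,k})/T_n of the number of non-zero-blocks of a uniformly random (c,m)-colored B_n-partition satisfies E_n = T_{n+1}/(m·T_n) − (1 + c)/m; equivalently, m·Σ_{k=0}^{n} k·T_{n,k} = T_{n+1} − (1 + c)·T_n. -/
def Tnk (m c : ℕ) : ℕ → ℕ → ℕ
  | 0, 0 => 1
  | 0, _ + 1 => 0
  | n + 1, 0 => c * Tnk m c n 0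
  | n + 1, k + 1 => Tnk m c n k + (m * (k + 1) + c) * Tnk m c n (k + 1)

def Ttot (m c n : ℕ) : ℕ := ∑ k ∈ Finset.range (n + 1), Tnk m c n k

/-- The expectation `E_n = (∑_k k·T_{n,k})/T_n` of the number of non-zero-blocks. -/
noncomputable def En (m c n : ℕ) : ℝ :=
  (∑ k ∈ Finset.range (n + 1), (k : ℝ) * Tnk m c n k) / Ttot m c n

/-!
The entry `T_{n,k}` enters row `n + 1` once through `T_{n+1,k+1}` and `m * k + c` times through
`T_{n+1,k}`, so `T_{n+1} = ∑_k (1 + c + m * k) * T_{n,k}`. The part of the weight that is linear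
in `k` is `m * T_n` times the expectation.
-/

theorem Tnk_eq_zero_of_lt (m c : ℕ) : ∀ {n k : ℕ}, n < k → Tnk m c n k = 0
  | 0, _ + 1, _ => by rw [Tnk]
  | n + 1, k + 1, h => by
    rw [Tnk, Tnk_eq_zero_of_lt m c (Nat.lt_of_succ_lt_succ h),
      Tnk_eq_zero_of_lt m c (Nat.lt_of_succ_lt h), mul_zero, add_zero]

theorem Tnk_self (m c n : ℕ) : Tnk m c n n = 1 := by
  induction n with
  | zero => rw [Tnk]
  | succ n ih => rw [Tnk, ih, Tnk_eq_zero_of_lt m c n.lt_succ_self, mul_zero, add_zero]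

theorem Ttot_pos (m c n : ℕ) : 0 < Ttot m c n :=
  Finset.sum_pos' (fun _ _ ↦ Nat.zero_le _)
    ⟨n, Finset.self_mem_range_succ n, (Tnk_self m c n).symm ▸ Nat.one_pos⟩

theorem sum_Tnk_succ_smul {M : Type*} [AddCommMonoid M] (m c n : ℕ) (f : ℕ → M) :
    ∑ k ∈ Finset.range (n + 2), Tnk m c (n + 1) k • f k =
      ∑ k ∈ Finset.range (n + 1), Tnk m c n k • (f (k + 1) + (m * k + c) • f k) := by
  have shift : ∑ k ∈ Finset.range (n + 1), ((m * (k + 1) + c) * Tnk m c n (k + 1)) • f (k + 1) +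
        (c * Tnk m c n 0) • f 0 =
      ∑ k ∈ Finset.range (n + 1), ((m * k + c) * Tnk m c n k) • f k := by
    have top : ((m * (n + 1) + c) * Tnk m c n (n + 1)) • f (n + 1) = 0 := by
      rw [Tnk_eq_zero_of_lt m c n.lt_succ_self, mul_zero, zero_smul]
    have h := Finset.sum_range_succ' (fun k ↦ ((m * k + c) * Tnk m c n k) • f k) (n + 1)
    rw [Finset.sum_range_succ, top, add_zero, mul_zero, zero_add] at h
    exact h.symm
  calc ∑ k ∈ Finset.range (n + 2), Tnk m c (n + 1) k • f k
    _ = ∑ k ∈ Finset.range (n + 1), Tnk m c n k • f (k + 1) +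
          (∑ k ∈ Finset.range (n + 1), ((m * (k + 1) + c) * Tnk m c n (k + 1)) • f (k + 1) +
            (c * Tnk m c n 0) • f 0) := by
      simp only [Finset.sum_range_succ' _ (n + 1), Tnk, add_smul, Finset.sum_add_distrib, add_assoc]
    _ = ∑ k ∈ Finset.range (n + 1), Tnk m c n k • (f (k + 1) + (m * k + c) • f k) := by
      rw [shift]
      simp only [smul_add, smul_smul, mul_comm, Finset.sum_add_distrib]

theorem Ttot_succ (m c n : ℕ) :
    Ttot m c (n + 1) =
      (1 + c) * Ttot m c n + m * ∑ k ∈ Finset.range (n + 1), k * Tnk m c n k := by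
  calc Ttot m c (n + 1)
    _ = ∑ k ∈ Finset.range (n + 1), Tnk m c n k * (1 + (m * k + c)) := by
      simpa only [smul_eq_mul, mul_one, Ttot] using sum_Tnk_succ_smul m c n fun _ ↦ (1 : ℕ)
    _ = (1 + c) * Ttot m c n + m * ∑ k ∈ Finset.range (n + 1), k * Tnk m c n k := by
      rw [Ttot, Finset.mul_sum, Finset.mul_sum, ← Finset.sum_add_distrib]
      exact Finset.sum_congr rfl fun k _ ↦ by ring

theorem cast_Ttot_succ {R : Type*} [Semiring R] (m c n : ℕ) :
    (Ttot m c (n + 1) : R) =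
      (1 + c) * Ttot m c n + m * ∑ k ∈ Finset.range (n + 1), (k : R) * Tnk m c n k := by
  exact_mod_cast congrArg (Nat.cast : ℕ → R) (Ttot_succ m c n)

theorem En_eq_div_sub_div {m : ℕ} (hm : m ≠ 0) (c n : ℕ) :
    En m c n = (Ttot m c (n + 1) : ℝ) / (m * Ttot m c n) - (1 + c) / m := by
  have hT : (Ttot m c n : ℝ) ≠ 0 := Nat.cast_ne_zero.mpr (Ttot_pos m c n).ne'
  rw [En, cast_Ttot_succ]
  field_simp
  ring

/-- `E_n = T_{n+1}/(m·T_n) − (1+c)/m`; equivalently,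
`m·∑_k k·T_{n,k} = T_{n+1} − (1+c)·T_n`. -/
theorem stmt_4 (m c : ℕ) (hm : 0 < m) (hc : 0 < c) (n : ℕ) :
    En m c n = (Ttot m c (n + 1) : ℝ) / (m * Ttot m c n) - (1 + c) / m ∧
    (m : ℤ) * ∑ k ∈ Finset.range (n + 1), (k : ℤ) * Tnk m c n k =
      (Ttot m c (n + 1) : ℤ) - (1 + c) * Ttot m c n :=
  ⟨En_eq_div_sub_div hm.ne' c n, eq_sub_of_add_eq' (cast_Ttot_succ m c n).symm⟩
end

section
/- Let f(x) = x·(e^{m·x} + c), and for each i ∈ {0,1,2} let t_i = t_i(n) be the unique positive real number with f(t_i) = n + i. Then as n → ∞, t_2 − t_1 = 1/(m·n) − 1/(m²·n·t_0) + O(1/(n·log² n)). -/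
open Filter

/-!
For `f(x) = x (e^{mx} + c)` one has `f'(x) = m f(x) + f(x)/x - mcx`, and `x` is only of logarithmic
size compared with `f(x)`. If `s` and `t` tend to infinity while `f(s) - f(t)` stays bounded, then
`s - t` is bounded too, because `f` eventually expands distances, so
`f'(s) = m f(t) (1 + ε + O(ε²))` with `ε = 1/(mt)`. By the mean value theorem `t₂ - t₁ = 1/f'(s)`
for such an `s` (with `t = t₀`), and inverting the expansion gives
`t₂ - t₁ = (1 - ε + O(ε²))/(mn)`. Finally `f(x) ≤ e^{(1 + m + |c|) x}` gives `log n = O(t₀)`,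
which turns `O(1/(n t₀²))` into the stated error term.
-/

section

open Asymptotics Set Topology Real

section Inversion

variable {ι 𝕜 : Type*} [NormedField 𝕜] {l : Filter ι} {u ε : ι → 𝕜}

lemma tendsto_one_of_isBigO_sub_one_add (hε : Tendsto ε l (𝓝 0))
    (hu : (fun i => u i - (1 + ε i)) =O[l] fun i => ε i ^ 2) : Tendsto u l (𝓝 1) := by
  have hrem : Tendsto (fun i => u i - (1 + ε i)) l (𝓝 0) :=
    hu.trans_tendsto (by simpa using hε.pow 2)
  simpa using hrem.add (hε.const_add 1)

lemma isBigO_inv_sub_one_sub (hε : Tendsto ε l (𝓝 0))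
    (hu : (fun i => u i - (1 + ε i)) =O[l] fun i => ε i ^ 2) :
    (fun i => (u i)⁻¹ - (1 - ε i)) =O[l] fun i => ε i ^ 2 := by
  have hu_one : Tendsto u l (𝓝 1) := tendsto_one_of_isBigO_sub_one_add hε hu
  have hu_inv : (fun i => (u i)⁻¹) =O[l] fun _ => (1 : 𝕜) :=
    (hu_one.inv₀ one_ne_zero).isBigO_one 𝕜
  have hsub : (fun i => 1 - ε i) =O[l] fun _ => (1 : 𝕜) := (hε.const_sub 1).isBigO_one 𝕜
  have hdefect : (fun i => ε i ^ 2 - (u i - (1 + ε i)) * (1 - ε i)) =O[l] fun i => ε i ^ 2 :=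
    (isBigO_refl _ l).sub (by simpa using hu.mul hsub)
  refine (hu_inv.mul hdefect).congr' ?_ (.of_forall fun i => one_mul _)
  filter_upwards [hu_one.eventually_ne one_ne_zero] with i hi
  field_simp
  ring

end Inversion

/-- The function `f(x) = x (e^{mx} + c)` of the theorem, for real parameters. -/
noncomputable def mulExpAdd (m c x : ℝ) : ℝ := x * (exp (m * x) + c)

variable {ι : Type*} {l : Filter ι} {m c : ℝ} {s t u v : ι → ℝ}

lemma mulExpAdd_le_exp {x : ℝ} (hm : 0 ≤ m) (hx : 0 ≤ x) :
    mulExpAdd m c x ≤ exp ((1 + m + |c|) * x) := by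
  have hexp : 1 ≤ exp (m * x) := one_le_exp (by positivity)
  calc mulExpAdd m c x ≤ x * (exp (m * x) + |c| * exp (m * x)) := by
        unfold mulExpAdd
        gcongr
        exact (le_abs_self c).trans (le_mul_of_one_le_right (abs_nonneg c) hexp)
    _ = exp (m * x) * ((1 + |c|) * x) := by ring
    _ ≤ exp (m * x) * exp ((1 + |c|) * x) := by
        gcongr
        linarith [add_one_le_exp ((1 + |c|) * x)]
    _ = exp ((1 + m + |c|) * x) := by rw [← exp_add]; ring_nf

lemma isBigO_log_mulExpAdd (hm : 0 ≤ m) (ht : ∀ᶠ i in l, 0 ≤ t i)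
    (hft : Tendsto (fun i => mulExpAdd m c (t i)) l atTop) :
    (fun i => log (mulExpAdd m c (t i))) =O[l] t := by
  refine .of_bound (1 + m + |c|) ?_
  filter_upwards [ht, hft.eventually_ge_atTop 1] with i hti hfi
  rw [norm_of_nonneg (log_nonneg hfi), norm_of_nonneg hti, log_le_iff_le_exp (by linarith)]
  exact mulExpAdd_le_exp hm hti

lemma tendsto_atTop_of_mulExpAdd (hm : 0 ≤ m) (ht : ∀ᶠ i in l, 0 ≤ t i)
    (hft : Tendsto (fun i => mulExpAdd m c (t i)) l atTop) : Tendsto t l atTop := by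
  have hexp : Tendsto (fun i => exp ((1 + m + |c|) * t i)) l atTop :=
    tendsto_atTop_mono' l (ht.mono fun _ => mulExpAdd_le_exp hm) hft
  exact (tendsto_const_mul_atTop_of_pos (by positivity)).1 (tendsto_exp_comp_atTop.1 hexp)

lemma tendsto_exp_mul_atTop (hm : 0 < m) : Tendsto (fun x => exp (m * x)) atTop atTop :=
  tendsto_exp_atTop.comp (tendsto_id.const_mul_atTop hm)

lemma tendsto_mulExpAdd_atTop (hm : 0 < m) : Tendsto (mulExpAdd m c) atTop atTop :=
  tendsto_id.atTop_mul_atTop₀ (tendsto_atTop_add_const_right _ c (tendsto_exp_mul_atTop hm))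

lemma isLittleO_pow_mulExpAdd (hm : 0 < m) (k : ℕ) :
    (fun x => x ^ k) =o[atTop] mulExpAdd m c := by
  have hc : (fun _ => c) =o[atTop] fun x => exp (m * x) :=
    isLittleO_const_left.2 <| .inr <| tendsto_norm_atTop_atTop.comp (tendsto_exp_mul_atTop hm)
  have hone : (fun _ => (1 : ℝ)) =O[atTop] fun x : ℝ => x :=
    (isLittleO_const_id_atTop 1).isBigO
  refine (isLittleO_pow_exp_pos_mul_atTop k hm).trans_isBigO ?_
  exact (hone.mul hc.right_isBigO_add').congr_left fun _ => one_mul _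

lemma differentiable_mulExpAdd : Differentiable ℝ (mulExpAdd m c) := by
  unfold mulExpAdd
  fun_prop

lemma deriv_mulExpAdd {x : ℝ} (hx : x ≠ 0) :
    deriv (mulExpAdd m c) x = m * mulExpAdd m c x + mulExpAdd m c x / x - m * c * x := by
  have hexp : HasDerivAt (fun y => exp (m * y)) (exp (m * x) * m) x := by
    simpa using ((hasDerivAt_id x).const_mul m).exp
  have hderiv : HasDerivAt (mulExpAdd m c) _ x := (hasDerivAt_id x).mul (hexp.add_const c)
  rw [hderiv.deriv, id, mulExpAdd]
  field_simp
  ring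

lemma eventually_monotoneOn_mulExpAdd_sub_id (hm : 0 < m) :
    ∀ᶠ K in atTop, MonotoneOn (fun x => mulExpAdd m c x - x) (Ici K) := by
  filter_upwards [eventually_ge_atTop 0, (tendsto_exp_mul_atTop hm).eventually_ge_atTop (1 - c)]
    with K hK hexpK
  intro x hx y hy hxy
  have hKx : exp (m * K) ≤ exp (m * x) := by gcongr; exact hx
  have hfactor : exp (m * x) + c - 1 ≤ exp (m * y) + c - 1 := by gcongr
  have hprod : x * (exp (m * x) + c - 1) ≤ y * (exp (m * y) + c - 1) :=
    mul_le_mul hxy hfactor (by linarith) (hK.trans hy)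
  simp only [mulExpAdd]
  linarith

lemma eventually_monotoneOn_mulExpAdd (hm : 0 < m) :
    ∀ᶠ K in atTop, MonotoneOn (mulExpAdd m c) (Ici K) := by
  filter_upwards [eventually_monotoneOn_mulExpAdd_sub_id hm] with K hK
  simpa using hK.add monotoneOn_id

lemma isBigO_sub_mulExpAdd_sub (hm : 0 < m) (hs : Tendsto s l atTop) (ht : Tendsto t l atTop) :
    (fun i => s i - t i) =O[l] fun i => mulExpAdd m c (s i) - mulExpAdd m c (t i) := by
  obtain ⟨K, hK⟩ := (eventually_monotoneOn_mulExpAdd_sub_id (c := c) hm).exists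
  refine .of_bound' ?_
  filter_upwards [hs.eventually_ge_atTop K, ht.eventually_ge_atTop K] with i hsi hti
  simp only [norm_eq_abs]
  rcases le_total (s i) (t i) with hst | hts
  · rw [abs_sub_comm, abs_of_nonneg (sub_nonneg.2 hst), abs_sub_comm]
    exact le_abs.2 (.inl (by linarith only [hK hsi hti hst]))
  · rw [abs_of_nonneg (sub_nonneg.2 hts)]
    exact le_abs.2 (.inl (by linarith only [hK hti hsi hts]))

lemma exists_mem_uIcc_deriv_mul_sub_eq {f : ℝ → ℝ} (hf : Differentiable ℝ f) (x y : ℝ) :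
    ∃ z ∈ uIcc x y, f y - f x = deriv f z * (y - x) := by
  obtain ⟨z, hz, hfz⟩ := domain_mvt
    (fun w _ => (hf w).hasDerivAt.hasFDerivAt.hasFDerivWithinAt) (convex_uIcc x y)
    left_mem_uIcc right_mem_uIcc
  exact ⟨z, segment_eq_uIcc x y ▸ hz, by simpa [mul_comm] using hfz⟩

lemma isBigO_mulExpAdd_sub_of_mem_uIcc (hm : 0 < m) (hu : Tendsto u l atTop)
    (hv : Tendsto v l atTop) (hs : ∀ i, s i ∈ uIcc (u i) (v i)) :
    (fun i => mulExpAdd m c (s i) - mulExpAdd m c (u i)) =O[l]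
      fun i => mulExpAdd m c (v i) - mulExpAdd m c (u i) := by
  obtain ⟨K, hK⟩ := (eventually_monotoneOn_mulExpAdd (c := c) hm).exists
  refine .of_bound' ?_
  filter_upwards [hu.eventually_ge_atTop K, hv.eventually_ge_atTop K] with i hui hvi
  have hsub : uIcc (u i) (v i) ⊆ Ici K := fun x hx => (le_inf hui hvi).trans hx.1
  exact abs_sub_left_of_mem_uIcc ((hK.mono hsub).mapsTo_uIcc (hs i))

lemma exists_isBigO_deriv_mulExpAdd_mul_sub_eq (hm : 0 < m) (hu : Tendsto u l atTop)
    (hv : Tendsto v l atTop)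
    (hut : (fun i => mulExpAdd m c (u i) - mulExpAdd m c (t i)) =O[l] fun _ => (1 : ℝ))
    (hvt : (fun i => mulExpAdd m c (v i) - mulExpAdd m c (t i)) =O[l] fun _ => (1 : ℝ)) :
    ∃ s : ι → ℝ, Tendsto s l atTop ∧
      (fun i => mulExpAdd m c (s i) - mulExpAdd m c (t i)) =O[l] (fun _ => (1 : ℝ)) ∧
      ∀ i, mulExpAdd m c (v i) - mulExpAdd m c (u i) =
        deriv (mulExpAdd m c) (s i) * (v i - u i) := by
  choose s hs hmvt using fun i => exists_mem_uIcc_deriv_mul_sub_eq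
    (differentiable_mulExpAdd (m := m) (c := c)) (u i) (v i)
  have hvu := (hvt.sub hut).congr_left fun i => sub_sub_sub_cancel_right _ _ _
  have hsu := (isBigO_mulExpAdd_sub_of_mem_uIcc hm hu hv hs).trans hvu
  exact ⟨s, tendsto_atTop_mono (fun i => (hs i).1) (tendsto_inf_atTop l hu hv),
    (hsu.add hut).congr_left fun i => sub_add_sub_cancel _ _ _, hmvt⟩

lemma isBigO_pow_div_mulExpAdd (hm : 0 < m) (k : ℕ) :
    (fun x => x ^ k / mulExpAdd m c x) =O[atTop] fun x => (x ^ 2)⁻¹ := by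
  have hpow : (fun x => x ^ k * x ^ 2) =O[atTop] mulExpAdd m c := by
    simpa only [pow_add] using (isLittleO_pow_mulExpAdd hm (k + 2)).isBigO
  refine (hpow.mul (isBigO_refl (fun x => (mulExpAdd m c x * x ^ 2)⁻¹) atTop)).congr' ?_ ?_
  all_goals
    filter_upwards [eventually_ne_atTop 0, (tendsto_mulExpAdd_atTop hm).eventually_ne_atTop 0]
      with x hx hfx
    field_simp

lemma isBigO_deriv_mulExpAdd_div_sub (hm : 0 < m) (hs : Tendsto s l atTop)
    (ht : Tendsto t l atTop)
    (hst : (fun i => mulExpAdd m c (s i) - mulExpAdd m c (t i)) =O[l] fun _ => (1 : ℝ)) :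
    (fun i => deriv (mulExpAdd m c) (s i) / (m * mulExpAdd m c (t i)) - (1 + 1 / (m * t i)))
      =O[l] fun i => (t i ^ 2)⁻¹ := by
  set f := mulExpAdd m c with hf
  have hpow (k : ℕ) : (fun i => t i ^ k / f (t i)) =O[l] fun i => (t i ^ 2)⁻¹ :=
    (isBigO_pow_div_mulExpAdd hm k).comp_tendsto ht
  have hdist : (fun i => s i - t i) =O[l] fun _ => (1 : ℝ) :=
    (isBigO_sub_mulExpAdd_sub hm hs ht).trans hst
  have hequiv : s ~[l] t :=
    hdist.trans_isLittleO (isLittleO_const_left.2 <| .inr (tendsto_norm_atTop_atTop.comp ht))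
  have hfactor : (fun i => 1 + (s i)⁻¹ / m) =O[l] fun _ => (1 : ℝ) :=
    ((hs.inv_tendsto_atTop.div_const m).const_add 1).isBigO_one ℝ
  have hvalue : (fun i => (1 + (s i)⁻¹ / m) * ((f (s i) - f (t i)) * (t i ^ 0 / f (t i)))) =O[l]
      fun i => (t i ^ 2)⁻¹ := by
    simpa only [one_mul] using hfactor.mul (hst.mul (hpow 0))
  have hlinear : (fun i => c * (s i / f (t i))) =O[l] fun i => (t i ^ 2)⁻¹ := by
    have hs_div : (fun i => s i / f (t i)) =O[l] fun i => t i ^ 1 / f (t i) := by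
      simpa only [div_eq_mul_inv, pow_one] using hequiv.isBigO.mul (isBigO_refl _ l)
    exact (hs_div.trans (hpow 1)).const_mul_left c
  have hinv : (fun i => m⁻¹ * ((s i - t i) * ((s i)⁻¹ * (t i)⁻¹))) =O[l]
      fun i => (t i ^ 2)⁻¹ := by
    have hprod := (hdist.mul (hequiv.inv.isBigO.mul (isBigO_refl t⁻¹ l))).const_mul_left m⁻¹
    exact hprod.congr_right fun i => by simp only [Pi.inv_apply]; ring
  refine ((hvalue.sub hinv).sub hlinear).congr' ?_ .rfl
  filter_upwards [hs.eventually_ne_atTop 0, ht.eventually_ne_atTop 0,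
    ((tendsto_mulExpAdd_atTop hm).comp ht).eventually_ne_atTop 0] with i hsi hti hfi
  rw [deriv_mulExpAdd hsi, ← hf]
  rw [Function.comp_apply, ← hf] at hfi
  field_simp
  ring

theorem isBigO_sub_sub_mulExpAdd (hm : 0 < m) (ht : Tendsto t l atTop) (hu : Tendsto u l atTop)
    (hv : Tendsto v l atTop)
    (hut : (fun i => mulExpAdd m c (u i) - mulExpAdd m c (t i)) =O[l] fun _ => (1 : ℝ))
    (hvt : (fun i => mulExpAdd m c (v i) - mulExpAdd m c (t i)) =O[l] fun _ => (1 : ℝ)) :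
    (fun i => v i - u i - (mulExpAdd m c (v i) - mulExpAdd m c (u i)) *
        (1 / (m * mulExpAdd m c (t i)) - 1 / (m ^ 2 * mulExpAdd m c (t i) * t i)))
      =O[l] fun i => 1 / (mulExpAdd m c (t i) * t i ^ 2) := by
  obtain ⟨s, hs, hst, hmvt⟩ := exists_isBigO_deriv_mulExpAdd_mul_sub_eq hm hu hv hut hvt
  set f := mulExpAdd m c with hf
  set w := fun i => deriv f (s i) / (m * f (t i)) with hw_def
  set ε := fun i => 1 / (m * t i) with hε_def
  have hε : Tendsto ε l (𝓝 0) := tendsto_const_nhds.div_atTop (ht.const_mul_atTop hm)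
  have hε_sq (i : ι) : (m ^ 2)⁻¹ * (t i ^ 2)⁻¹ = ε i ^ 2 := by
    rw [← mul_inv, ← mul_pow, ← inv_pow, ← one_div]
  have hw : (fun i => w i - (1 + ε i)) =O[l] fun i => ε i ^ 2 :=
    ((isBigO_deriv_mulExpAdd_div_sub hm hs ht hst).const_mul_right
      (c := (m ^ 2)⁻¹) (by positivity)).congr_right hε_sq
  have hvu : (fun i => f (v i) - f (u i)) =O[l] fun _ => (1 : ℝ) :=
    (hvt.sub hut).congr_left fun i => sub_sub_sub_cancel_right _ _ _
  have herror : (fun i => (f (v i) - f (u i)) * (m * f (t i))⁻¹ * ((w i)⁻¹ - (1 - ε i))) =O[l]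
      fun i => 1 / (f (t i) * t i ^ 2) := by
    have hprod := (hvu.mul (isBigO_refl (fun i => (m * f (t i))⁻¹) l)).mul
      (isBigO_inv_sub_one_sub hε hw)
    refine hprod.trans (.congr_left (isBigO_const_mul_self (m ^ 3)⁻¹ _ l) fun i => ?_)
    rw [← hε_sq]
    field_simp
  refine herror.congr' ?_ .rfl
  filter_upwards [(tendsto_one_of_isBigO_sub_one_add hε hw).eventually_ne one_ne_zero,
    ht.eventually_ne_atTop 0, ((tendsto_mulExpAdd_atTop hm).comp ht).eventually_ne_atTop 0]
    with i hwi hti hfi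
  rw [Function.comp_apply, ← hf] at hfi
  have hderiv : deriv f (s i) ≠ 0 := (div_ne_zero_iff.1 hwi).1
  simp only [hw_def, hε_def, hmvt]
  field_simp

lemma isBigO_one_div_mulExpAdd_mul_log_sq (hm : 0 ≤ m) (ht : ∀ᶠ i in l, 0 ≤ t i)
    (hft : Tendsto (fun i => mulExpAdd m c (t i)) l atTop) :
    (fun i => 1 / (mulExpAdd m c (t i) * t i ^ 2)) =O[l]
      fun i => 1 / (mulExpAdd m c (t i) * log (mulExpAdd m c (t i)) ^ 2) := by
  have hsq := (isBigO_refl (fun i => mulExpAdd m c (t i)) l).mul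
    ((isBigO_log_mulExpAdd hm ht hft).pow 2)
  simp only [one_div]
  refine hsq.inv_rev ?_
  filter_upwards [hft.eventually_gt_atTop 1] with i hi hzero
  have hlog : 0 < log (mulExpAdd m c (t i)) := log_pos hi
  exact absurd hzero (by positivity)

theorem stmt_12_general (hm : 0 < m) {y t₀ t₁ t₂ : ι → ℝ} {a b : ℝ} (hy : Tendsto y l atTop)
    (ht₀ : ∀ᶠ i in l, 0 < t₀ i ∧ mulExpAdd m c (t₀ i) = y i)
    (ht₁ : ∀ᶠ i in l, 0 < t₁ i ∧ mulExpAdd m c (t₁ i) = y i + a)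
    (ht₂ : ∀ᶠ i in l, 0 < t₂ i ∧ mulExpAdd m c (t₂ i) = y i + b) :
    (fun i => t₂ i - t₁ i - (b - a) * (1 / (m * y i) - 1 / (m ^ 2 * y i * t₀ i)))
      =O[l] fun i => 1 / (y i * log (y i) ^ 2) := by
  have hft₀ : Tendsto (fun i => mulExpAdd m c (t₀ i)) l atTop :=
    hy.congr' (ht₀.mono fun _ h => h.2.symm)
  have ht₀_nonneg : ∀ᶠ i in l, 0 ≤ t₀ i := ht₀.mono fun _ h => h.1.le
  have htop {x : ι → ℝ} {d : ℝ} (hx : ∀ᶠ i in l, 0 < x i ∧ mulExpAdd m c (x i) = y i + d) :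
      Tendsto x l atTop :=
    tendsto_atTop_of_mulExpAdd hm.le (hx.mono fun _ h => h.1.le)
      ((tendsto_atTop_add_const_right l d hy).congr' (hx.mono fun _ h => h.2.symm))
  have hgap {x : ι → ℝ} {d : ℝ} (hx : ∀ᶠ i in l, 0 < x i ∧ mulExpAdd m c (x i) = y i + d) :
      (fun i => mulExpAdd m c (x i) - mulExpAdd m c (t₀ i)) =O[l] fun _ => (1 : ℝ) := by
    refine (isBigO_const_const d one_ne_zero l).congr' ?_ .rfl
    filter_upwards [ht₀, hx] with i h₀ hxi
    rw [h₀.2, hxi.2, add_sub_cancel_left]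
  have hexpansion := (isBigO_sub_sub_mulExpAdd hm
    (tendsto_atTop_of_mulExpAdd hm.le ht₀_nonneg hft₀) (htop ht₁) (htop ht₂) (hgap ht₁)
    (hgap ht₂)).trans (isBigO_one_div_mulExpAdd_mul_log_sq hm.le ht₀_nonneg hft₀)
  refine hexpansion.congr' ?_ (ht₀.mono fun i h => by simp only [h.2])
  filter_upwards [ht₀, ht₁, ht₂] with i h₀ h₁ h₂
  rw [h₀.2, h₁.2, h₂.2, add_sub_add_left_eq_sub]

end

/-- If `t i` is the unique positive solution of `t·(e^{m·t} + c) = n + i`, then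
`t_2 − t_1 = 1/(m·n) − 1/(m²·n·t_0) + O(1/(n·log² n))` as `n → ∞`. -/
theorem stmt_12 (m c : ℕ) (hm : 0 < m) (t0 t1 t2 : ℕ → ℝ)
    (ht0 : ∀ n : ℕ, 2 ≤ n → 0 < t0 n ∧ t0 n * (Real.exp (m * t0 n) + c) = n)
    (ht1 : ∀ n : ℕ, 2 ≤ n → 0 < t1 n ∧ t1 n * (Real.exp (m * t1 n) + c) = n + 1)
    (ht2 : ∀ n : ℕ, 2 ≤ n → 0 < t2 n ∧ t2 n * (Real.exp (m * t2 n) + c) = n + 2) :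
    (fun n : ℕ => t2 n - t1 n - (1 / (m * n) - 1 / ((m : ℝ) ^ 2 * n * t0 n)))
      =O[atTop] (fun n : ℕ => 1 / (n * (Real.log n) ^ 2)) := by
  simpa only [show (2 : ℝ) - 1 = 1 by norm_num, one_mul] using
    stmt_12_general (Nat.cast_pos.2 hm) tendsto_natCast_atTop_atTop
      (eventually_atTop.2 ⟨2, ht0⟩) (eventually_atTop.2 ⟨2, ht1⟩) (eventually_atTop.2 ⟨2, ht2⟩)
end
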